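/- arXiv:2405.16043 — 2 statements merged into one kernel-verified Lean document; each statement's English description precedes it below -/
import Mathlib

section
/- (Pseudolabel correction via bad-to-good expansion, average-case-robust generalization of Wei et al.'s bound.) Fix a label i, η ≥ 0, q ≥ 0 and c > α_i/(1 − α_i). Suppose M_η(S_i^bad, F) satisfies (c,q,η)-robust expansion on (S_i^good, S_i^bad). Let c̃ = c·(1 − α_i)/α_i and suppose f ∈ F satisfies P({x : f(x) ≠ ỹ(x) or x ∉ R_η(f)} | S_i) ≤ α_i·(1 + q·(c̃ − 1)). Then err(f, y | S_i) ≤ 2·( q·α_i + P(X \ R_η(f) | S_i) ) + err(f, ỹ | S_i) − α_i. -/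
open Finset
open scoped Classical

noncomputable section

variable {X Y : Type*} [Fintype X] [DecidableEq X] [DecidableEq Y]

/-- Probability of a finite set of points under the weight function `μ`. -/
def Pw (μ : X → ℝ) (A : Finset X) : ℝ := ∑ x ∈ A, μ x

/-- Conditional probability `P(A | B) = P(A ∩ B) / P(B)`. -/
def cPw (μ : X → ℝ) (A B : Finset X) : ℝ := Pw μ (A ∩ B) / Pw μ B

/-- `err(f, g | U) = P({x : f x ≠ g x} | U)`. -/
def errP {Z : Type*} (μ : X → ℝ) (f g : X → Z) (U : Finset X) : ℝ :=
  cPw μ (univ.filter fun x => f x ≠ g x) U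

/-- Neighborhood of a set: `N(A) = ⋃_{x ∈ A} N(x)`. -/
def nbhd (N : X → Finset X) (A : Finset X) : Finset X := A.biUnion N

/-- `r(f, x) = P({x' : f x' ≠ f x} | N(x))`. -/
def rob (μ : X → ℝ) (N : X → Finset X) (f : X → Y) (x : X) : ℝ :=
  cPw μ (univ.filter fun x' => f x' ≠ f x) (N x)

/-- `R_η(f) = {x : r(f,x) ≤ η}`, the set of η-robust points of `f`. -/
def Rset (μ : X → ℝ) (N : X → Finset X) (η : ℝ) (f : X → Y) : Finset X :=
  univ.filter fun x => rob μ N f x ≤ η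

/-- Edge weight `w(x, x') = P({x})·P({x'})·1[x ∈ N(x')]`. -/
def wE (μ : X → ℝ) (N : X → Finset X) (x x' : X) : ℝ :=
  μ x * μ x' * (if x ∈ N x' then 1 else 0)

/-- `w(V, U) = Σ_{x ∈ V, x' ∈ U} w(x, x')`. -/
def wS (μ : X → ℝ) (N : X → Finset X) (V U : Finset X) : ℝ :=
  ∑ x ∈ V, ∑ x' ∈ U, wE μ N x x'

/-- `P_{1-η}(U, A)`: the η-robust neighborhood size of `U` in `A`. -/
def robNbhdSize (μ : X → ℝ) (N : X → Finset X) (η : ℝ) (U A : Finset X) : ℝ :=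
  sInf {p : ℝ | ∃ V : Finset X,
    (1 - η) * wS μ N (nbhd N U) U ≤ wS μ N V U ∧ p = cPw μ V A}

/-- `M` satisfies `(c, q, η)`-robust expansion on `(A, B)`. -/
def RobustExpansion (μ : X → ℝ) (N : X → Finset X) (c q η : ℝ)
    (M : Set (Finset X)) (A B : Finset X) : Prop :=
  ∀ U ∈ M, cPw μ U B > q → robNbhdSize μ N η U A > c * cPw μ U B

/-- `M` satisfies `(c, q)`-expansion on `(A, B)` (the `η = 0` case). -/
def Expansion (μ : X → ℝ) (N : X → Finset X) (c q : ℝ)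
    (M : Set (Finset X)) (A B : Finset X) : Prop :=
  ∀ U ∈ M, cPw μ U B > q → cPw μ (nbhd N U) A > c * cPw μ U B

/-- Covered set `S = {x : ỹ x ≠ ∅}`. -/
def Scov (yt : X → Option Y) : Finset X := univ.filter fun x => yt x ≠ none

/-- `S_i = S ∩ X_i`. -/
def SiSet (y : X → Y) (yt : X → Option Y) (i : Y) : Finset X :=
  univ.filter fun x => yt x ≠ none ∧ y x = i

/-- `T_i = T ∩ X_i`. -/
def TiSet (y : X → Y) (yt : X → Option Y) (i : Y) : Finset X :=
  univ.filter fun x => yt x = none ∧ y x = i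

/-- `S_i^good = {x ∈ S_i : ỹ x = y x}`. -/
def SiGood (y : X → Y) (yt : X → Option Y) (i : Y) : Finset X :=
  univ.filter fun x => yt x = some (y x) ∧ y x = i

/-- `S_i^bad = S_i \ S_i^good`. -/
def SiBad (y : X → Y) (yt : X → Option Y) (i : Y) : Finset X :=
  SiSet y yt i \ SiGood y yt i

/-- `α_i = P(S_i^bad | S_i)`. -/
def alphaW (μ : X → ℝ) (y : X → Y) (yt : X → Option Y) (i : Y) : ℝ :=
  cPw μ (SiBad y yt i) (SiSet y yt i)

/-- `M_η(B, F) = {R_η(f) ∩ U(B,f) : f ∈ F}`, the η-robust mistake sets on `B`. -/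
def MFam (μ : X → ℝ) (N : X → Finset X) (η : ℝ) (y : X → Y)
    (B : Finset X) (F : Set (X → Y)) : Set (Finset X) :=
  {A | ∃ f ∈ F, A = Rset μ N η f ∩ (B.filter fun x => f x ≠ y x)}

/-- `M'_η(B, F) = {R_η(f) ∩ (B \ U(B,f)) : f ∈ F}`, the η-robust non-mistake sets on `B`. -/
def MFam' (μ : X → ℝ) (N : X → Finset X) (η : ℝ) (y : X → Y)
    (B : Finset X) (F : Set (X → Y)) : Set (Finset X) :=
  {A | ∃ f ∈ F, A = Rset μ N η f ∩ (B.filter fun x => f x = y x)}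

theorem Pw_eq_ite (μ : X → ℝ) (A : Finset X) : Pw μ A = ∑ x, if x ∈ A then μ x else 0 := by
  unfold Pw
  rw [← Finset.sum_filter]
  congr 1
  ext x
  simp

theorem Pw_nonneg' (μ : X → ℝ) (hμ : ∀ x, 0 ≤ μ x) (A : Finset X) : 0 ≤ Pw μ A :=
  Finset.sum_nonneg fun x _ => hμ x

theorem wS_eq (μ : X → ℝ) (N : X → Finset X) (V U : Finset X) :
    wS μ N V U = ∑ x' ∈ U, μ x' * Pw μ (V ∩ N x') := by
  unfold wS
  rw [Finset.sum_comm]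
  refine Finset.sum_congr rfl fun x' _ => ?_
  have : Pw μ (V ∩ N x') = ∑ x ∈ V, if x ∈ N x' then μ x else 0 := by
    unfold Pw
    rw [← Finset.sum_filter]
    congr 1
  rw [this, Finset.mul_sum]
  refine Finset.sum_congr rfl fun x _ => ?_
  unfold wE
  split_ifs <;> ring

theorem robNbhdSize_le (μ : X → ℝ) (hμ : ∀ x, 0 ≤ μ x) (N : X → Finset X) (η : ℝ)
    (U A V : Finset X) (h : (1 - η) * wS μ N (nbhd N U) U ≤ wS μ N V U) :
    robNbhdSize μ N η U A ≤ cPw μ V A := by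
  unfold robNbhdSize
  refine csInf_le ⟨0, ?_⟩ ⟨V, h, rfl⟩
  rintro p ⟨W, _, rfl⟩
  exact div_nonneg (Pw_nonneg' μ hμ _) (Pw_nonneg' μ hμ _)

theorem wS_robust (μ : X → ℝ) (hμ : ∀ x, 0 ≤ μ x) (N : X → Finset X) (η : ℝ)
    (hNpos : ∀ x, 0 < Pw μ (N x)) (f : X → Y) (i : Y) (U : Finset X)
    (hU : ∀ x ∈ U, x ∈ Rset μ N η f ∧ f x ≠ i) :
    (1 - η) * wS μ N (nbhd N U) U ≤ wS μ N (univ.filter fun x => f x ≠ i) U := by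
  rw [wS_eq, wS_eq, Finset.mul_sum]
  refine Finset.sum_le_sum fun x hx => ?_
  obtain ⟨hR, hfx⟩ := hU x hx
  have h1 : nbhd N U ∩ N x = N x := by
    ext z
    simp only [nbhd, Finset.mem_inter, Finset.mem_biUnion]
    exact ⟨fun h => h.2, fun h => ⟨⟨x, hx, h⟩, h⟩⟩
  rw [h1]
  have h2 : rob μ N f x ≤ η := by
    simpa [Rset] using hR
  unfold rob cPw at h2
  rw [div_le_iff₀ (hNpos x)] at h2
  have h3 : Pw μ (N x) ≤ Pw μ ((univ.filter fun x' => f x' ≠ f x) ∩ N x)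
      + Pw μ ((univ.filter fun x => f x ≠ i) ∩ N x) := by
    rw [Pw_eq_ite, Pw_eq_ite, Pw_eq_ite, ← Finset.sum_add_distrib]
    refine Finset.sum_le_sum fun z _ => ?_
    have := hμ z
    simp only [Finset.mem_inter, Finset.mem_filter, Finset.mem_univ, true_and]
    grind
  have := mul_le_mul_of_nonneg_left (show (1 - η) * Pw μ (N x) ≤
    Pw μ ((univ.filter fun x => f x ≠ i) ∩ N x) by linarith) (hμ x)
  linarith

/-- Pseudolabel correction via bad-to-good expansion,
average-case-robust generalization of Wei et al.'s bound,
Theorem `thm:wei-plc-avgrobust`. -/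
theorem wei_pseudolabel_correction_avg_robust
    (μ : X → ℝ) (N : X → Finset X) (y : X → Y) (yt : X → Option Y)
    (F : Set (X → Y)) (i : Y) (f : X → Y) (η c q : ℝ)
    (hμ : ∀ x, 0 ≤ μ x) (hμ1 : ∑ x, μ x = 1)
    (hNsym : ∀ x x', x ∈ N x' ↔ x' ∈ N x)
    (hNpos : ∀ x, 0 < Pw μ (N x))
    (hSi : 0 < Pw μ (SiSet y yt i))
    (hSg : 0 < Pw μ (SiGood y yt i))
    (hSb : 0 < Pw μ (SiBad y yt i))
    (hα0 : 0 < alphaW μ y yt i) (hα : alphaW μ y yt i < 1 / 2)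
    (hη : 0 ≤ η) (hq : 0 ≤ q)
    (hc : c > alphaW μ y yt i / (1 - alphaW μ y yt i))
    (hf : f ∈ F)
    (hexp : RobustExpansion μ N c q η (MFam μ N η y (SiBad y yt i) F)
      (SiGood y yt i) (SiBad y yt i))
    (hcond : cPw μ (univ.filter fun x => some (f x) ≠ yt x ∨ x ∉ Rset μ N η f)
        (SiSet y yt i)
      ≤ alphaW μ y yt i *
          (1 + q * (c * (1 - alphaW μ y yt i) / alphaW μ y yt i - 1))) :
    errP μ f y (SiSet y yt i) ≤
      2 * (q * alphaW μ y yt i + cPw μ (univ \ Rset μ N η f) (SiSet y yt i))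
        + errP μ (fun x => some (f x)) yt (SiSet y yt i)
        - alphaW μ y yt i := by
  have hSbsub : SiBad y yt i ∩ SiSet y yt i = SiBad y yt i :=
    Finset.inter_eq_left.mpr Finset.sdiff_subset
  have hsum : Pw μ (SiSet y yt i) = Pw μ (SiGood y yt i) + Pw μ (SiBad y yt i) := by
    rw [Pw_eq_ite, Pw_eq_ite, Pw_eq_ite, ← Finset.sum_add_distrib]
    refine Finset.sum_congr rfl fun z _ => ?_
    by_cases h1 : yt z = some (y z) <;> by_cases h2 : y z = i <;>
      by_cases h3 : yt z = none <;> simp_all [SiBad, SiSet, SiGood]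
  set U : Finset X := Rset μ N η f ∩ ((SiBad y yt i).filter fun x => f x ≠ y x) with hUdef
  have hUM : U ∈ MFam μ N η y (SiBad y yt i) F := ⟨f, hf, rfl⟩
  have hUb : U ∩ SiBad y yt i = U := by
    rw [Finset.inter_eq_left]
    exact Finset.inter_subset_right.trans (Finset.filter_subset _ _)
  have hmemU : ∀ z, z ∈ U ↔ z ∈ Rset μ N η f ∧ (yt z ≠ none ∧ y z = i ∧ yt z ≠ some (y z))
      ∧ f z ≠ y z := by
    intro z
    simp only [hUdef, SiBad, SiSet, SiGood, Finset.mem_inter, Finset.mem_filter,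
      Finset.mem_sdiff, Finset.mem_univ, true_and]
    tauto
  have hV := robNbhdSize_le μ hμ N η U (SiGood y yt i) (univ.filter fun x => f x ≠ i)
    (wS_robust μ hμ N η hNpos f i U (fun x hx => by
      have := (hmemU x).1 hx
      exact ⟨this.1, fun h => this.2.2 (h.trans this.2.1.2.1.symm)⟩))
  have hE : Pw μ ((univ.filter fun x => f x ≠ i) ∩ SiGood y yt i) + Pw μ (SiBad y yt i)
      ≤ Pw μ ((univ.filter fun x => some (f x) ≠ yt x ∨ x ∉ Rset μ N η f) ∩ SiSet y yt i)
        + Pw μ U := by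
    simp only [Pw_eq_ite, ← Finset.sum_add_distrib]
    refine Finset.sum_le_sum fun z _ => ?_
    have := hμ z
    simp only [hmemU, SiBad, SiSet, SiGood, Finset.mem_inter, Finset.mem_filter,
      Finset.mem_sdiff, Finset.mem_univ, true_and]
    grind
  have hF : Pw μ ((univ.filter fun x => f x ≠ y x) ∩ SiSet y yt i) + Pw μ (SiBad y yt i)
      ≤ 2 * (Pw μ U + Pw μ ((univ \ Rset μ N η f) ∩ SiSet y yt i))
        + Pw μ ((univ.filter fun x => some (f x) ≠ yt x) ∩ SiSet y yt i) := by
    simp only [Pw_eq_ite, ← Finset.sum_add_distrib, Finset.mul_sum]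
    refine Finset.sum_le_sum fun z _ => ?_
    have := hμ z
    simp only [hmemU, SiBad, SiSet, SiGood, Finset.mem_inter, Finset.mem_filter,
      Finset.mem_sdiff, Finset.mem_univ, true_and]
    grind
  have hαs : alphaW μ y yt i = Pw μ (SiBad y yt i) / Pw μ (SiSet y yt i) := by
    rw [alphaW, cPw, hSbsub]
  have hcUB : cPw μ U (SiBad y yt i) = Pw μ U / Pw μ (SiBad y yt i) := by
    rw [cPw, hUb]
  have hex := hexp U hUM
  rw [hcUB] at hex
  rw [hαs] at hc hcond ⊢
  have he1 : errP μ f y (SiSet y yt i)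
      = cPw μ (univ.filter fun x => f x ≠ y x) (SiSet y yt i) := by
    unfold errP
    congr!
  rw [he1]
  simp only [errP]
  unfold cPw at hcond hV ⊢
  clear_value U
  generalize Pw μ ((univ.filter fun x => some (f x) ≠ yt x ∨ x ∉ Rset μ N η f) ∩ SiSet y yt i)
    = E at *
  generalize Pw μ ((univ.filter fun x => f x ≠ i) ∩ SiGood y yt i) = v at *
  generalize Pw μ ((univ.filter fun x => f x ≠ y x) ∩ SiSet y yt i) = e1 at *
  generalize Pw μ ((univ \ Rset μ N η f) ∩ SiSet y yt i) = r at *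
  generalize Pw μ ((univ.filter fun x => some (f x) ≠ yt x) ∩ SiSet y yt i) = e2 at *
  generalize Pw μ (SiSet y yt i) = s at *
  generalize Pw μ (SiGood y yt i) = g at *
  generalize Pw μ (SiBad y yt i) = b at *
  generalize Pw μ U = u at *
  generalize robNbhdSize μ N η U (SiGood y yt i) = ρ at *
  clear hαs hcUB hα0 hα
  have h1α : 1 - b / s = g / s := by
    field_simp
    linarith
  rw [h1α] at hc hcond
  have hcg : b < c * g := by
    have : b / s / (g / s) = b / g := by field_simp
    rw [this, gt_iff_lt, div_lt_iff₀ hSg] at hc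
    exact hc
  have hE2 : E ≤ b + q * (c * g - b) := by
    have : b / s * (1 + q * (c * (g / s) / (b / s) - 1)) = (b + q * (c * g - b)) / s := by
      field_simp
    rw [this] at hcond
    exact (div_le_div_iff_of_pos_right hSi).1 hcond
  have hu : u ≤ q * b := by
    by_contra hlt
    push Not at hlt
    have h1 : u / b > q := by
      rw [gt_iff_lt, lt_div_iff₀ hSb]
      exact hlt
    have h2 := (hex h1).trans_le hV
    rw [lt_div_iff₀ hSg] at h2
    have h3 : u / b * b = u := by field_simp
    have h4 : q * (c * g - b) < u / b * (c * g - b) :=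
      mul_lt_mul_of_pos_right h1 (by linarith)
    nlinarith
  have hgoal : 2 * (q * (b / s) + r / s) + e2 / s - b / s = (2 * (q * b + r) + e2 - b) / s := by
    field_simp
  rw [hgoal, div_le_div_iff_of_pos_right hSi]
  linarith
end
end

section
/- (Two-sided concentration of the empirical expansion ratio for a fixed set.) In the setting of the fixed-set concentration lemma (A, B, U ⊆ X with P(A), P(B) > 0; deterministic n : X → X with n(x) ∈ B for x ∈ A; p = P({x : n(x) ∈ U} | A), q = P(U | B) ≥ q̄ > 0; i.i.d. samples x_1,…,x_{n_A} ∼ P(·|A) and z_1,…,z_{n_B} ∼ P(·|B), mutually independent; empirical frequencies p̂ = (1/n_A)·Σ_i 1[n(x_i) ∈ U] and q̂ = (1/n_B)·Σ_j 1[z_j ∈ U]; γ = n_B·q̄/n_A), for any δ ∈ (0,1] the probability that |p/q − p̂/q̂| > δ is at most 4·exp( −n_A·δ² · γ·q̄² / (4 + √γ)² ). -/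
open Finset
open scoped Classical

noncomputable section

variable {X : Type*} [Fintype X] [DecidableEq X]

/-- The conditional point mass function of `P(· | A)`. -/
def condPMF (μ : X → ℝ) (A : Finset X) (x : X) : ℝ :=
  (if x ∈ A then μ x else 0) / Pw μ A

/-- The probability that an i.i.d. sample from `P(· | A)` equals the tuple `xs`. -/
def prodW (μ : X → ℝ) (A : Finset X) {n : ℕ} (xs : Fin n → X) : ℝ :=
  ∏ j, condPMF μ A (xs j)

/-- Probability of an event `E` of two mutually independent i.i.d. samples,
of sizes `nA` from `P(· | A)` and `nB` from `P(· | B)`. -/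
def samplePr (μ : X → ℝ) (A B : Finset X) (nA nB : ℕ)
    (E : (Fin nA → X) → (Fin nB → X) → Prop) : ℝ :=
  ∑ xs : Fin nA → X, ∑ zs : Fin nB → X,
    prodW μ A xs * prodW μ B zs * (if E xs zs then 1 else 0)

/-- Probability of an event of two i.i.d. samples together with an independent
ghost copy of each. -/
def samplePr4 (μ : X → ℝ) (A B : Finset X) (nA nB : ℕ)
    (E : (Fin nA → X) → (Fin nB → X) → (Fin nA → X) → (Fin nB → X) → Prop) : ℝ :=
  ∑ xs : Fin nA → X, ∑ zs : Fin nB → X, ∑ xs' : Fin nA → X, ∑ zs' : Fin nB → X,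
    prodW μ A xs * prodW μ B zs * prodW μ A xs' * prodW μ B zs' *
      (if E xs zs xs' zs' then 1 else 0)

/-- Empirical frequency `(1/n)·Σ_j 1[g(x_j) ∈ U]` of a sample `xs`. -/
def empFreq (U : Finset X) (g : X → X) {n : ℕ} (xs : Fin n → X) : ℝ :=
  (∑ j, if g (xs j) ∈ U then (1 : ℝ) else 0) / n

/-- The empirical expansion ratio `ĉ(U) = p̂(U)/q̂(U)` of a pair of samples. -/
def empRatio (U : Finset X) (g : X → X) {nA nB : ℕ}
    (xs : Fin nA → X) (zs : Fin nB → X) : ℝ :=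
  empFreq U g xs / empFreq U id zs


lemma hoeff_aux (p s : ℝ) (h0 : 0 ≤ p) (h1 : p ≤ 1) :
    1 + p * (Real.exp s - 1) ≤ Real.exp (p * s + s ^ 2 / 8) := by
  let m : MeasureTheory.Measure ℝ :=
    ENNReal.ofReal p • MeasureTheory.Measure.dirac 1 +
      ENNReal.ofReal (1 - p) • MeasureTheory.Measure.dirac 0
  have hm : MeasureTheory.IsProbabilityMeasure m := by
    constructor
    simp only [m, MeasureTheory.Measure.add_apply, MeasureTheory.Measure.smul_apply,
      MeasureTheory.measure_univ, smul_eq_mul, mul_one]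
    rw [← ENNReal.ofReal_add h0 (by linarith)]
    simp
  have hint : ∀ f : ℝ → ℝ, Measurable f → ∫ x, f x ∂m = p * f 1 + (1 - p) * f 0 := by
    intro f hf
    have hi : ∀ (a c : ℝ), MeasureTheory.Integrable f
        (ENNReal.ofReal c • MeasureTheory.Measure.dirac a) := by
      intro a c
      apply MeasureTheory.Integrable.smul_measure _ ENNReal.ofReal_ne_top
      exact MeasureTheory.integrable_dirac (by simp [enorm_lt_top])
    rw [MeasureTheory.integral_add_measure (hi _ _) (hi _ _)]
    simp [MeasureTheory.integral_smul_measure, ENNReal.toReal_ofReal h0,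
      ENNReal.toReal_ofReal (sub_nonneg.2 h1)]
  have hb : ∀ᵐ x ∂m, (id x : ℝ) ∈ Set.Icc (0:ℝ) 1 := by
    simp only [m, MeasureTheory.ae_add_measure_iff]
    constructor
    · apply MeasureTheory.Measure.ae_smul_measure
      rw [MeasureTheory.ae_dirac_eq]; simp
    · apply MeasureTheory.Measure.ae_smul_measure
      rw [MeasureTheory.ae_dirac_eq]; simp
  have h := (ProbabilityTheory.hasSubgaussianMGF_of_mem_Icc (μ := m) (X := id)
    measurable_id.aemeasurable hb).mgf_le s
  unfold ProbabilityTheory.mgf at h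
  rw [hint _ (by fun_prop), hint _ (by fun_prop)] at h
  have e : p * s + s ^ 2 / 8 = s * p + s ^ 2 / 8 := by ring
  rw [e, Real.exp_add]
  have h2 : p * Real.exp (s * (1 - p)) + (1 - p) * Real.exp (-(s * p)) ≤ Real.exp (s ^ 2 / 8) := by
    convert h using 2
    · simp
    · simp
    · simp; ring
  have h3 := mul_le_mul_of_nonneg_left h2 (Real.exp_pos (s * p)).le
  refine le_trans (le_of_eq ?_) h3
  have e1 : Real.exp (s * p) * Real.exp (s * (1 - p)) = Real.exp s := by
    rw [← Real.exp_add]; congr 1; ring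
  have e2 : Real.exp (s * p) * Real.exp (-(s * p)) = 1 := by
    rw [← Real.exp_add]; simp
  linear_combination -p * e1 - (1 - p) * e2

lemma chern_aux (q s : ℝ) (h0 : 0 ≤ q) (hs : |s| ≤ 1) :
    1 + q * (Real.exp s - 1) ≤ Real.exp (q * (s + s ^ 2)) := by
  have h := (abs_le.1 (Real.abs_exp_sub_one_sub_id_le hs)).2
  have h2 : q * (Real.exp s - 1) ≤ q * (s + s ^ 2) :=
    mul_le_mul_of_nonneg_left (by linarith) h0
  have h3 := Real.add_one_le_exp (q * (s + s ^ 2))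
  linarith

lemma condPMF_nonneg (μ : X → ℝ) (hμ : ∀ x, 0 ≤ μ x) (A : Finset X) (hA : 0 < Pw μ A) (x : X) :
    0 ≤ condPMF μ A x := by
  unfold condPMF
  apply div_nonneg _ hA.le
  split_ifs
  · exact hμ x
  · exact le_rfl

lemma prodW_nonneg (μ : X → ℝ) (hμ : ∀ x, 0 ≤ μ x) (A : Finset X) (hA : 0 < Pw μ A) {n : ℕ}
    (xs : Fin n → X) : 0 ≤ prodW μ A xs :=
  Finset.prod_nonneg fun _ _ => condPMF_nonneg μ hμ A hA _

lemma condPMF_sum (μ : X → ℝ) (A : Finset X) (hA : 0 < Pw μ A) :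
    ∑ x, condPMF μ A x = 1 := by
  unfold condPMF
  rw [← Finset.sum_div, Finset.sum_ite_mem, Finset.univ_inter]
  exact div_self hA.ne'

lemma prodW_mul_sum (μ : X → ℝ) (A : Finset X) (n : ℕ) (f : X → ℝ) :
    ∑ xs : Fin n → X, prodW μ A xs * ∏ j, f (xs j) = (∑ x, condPMF μ A x * f x) ^ n := by
  have h := Finset.prod_univ_sum (fun _ : Fin n => (Finset.univ : Finset X))
    (fun _ x => condPMF μ A x * f x)
  rw [Fintype.piFinset_univ] at h
  simp only [Finset.prod_const, Finset.card_univ, Fintype.card_fin] at h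
  rw [h]
  simp only [prodW, Finset.prod_mul_distrib]

lemma prodW_sum (μ : X → ℝ) (A : Finset X) (hA : 0 < Pw μ A) (n : ℕ) :
    ∑ xs : Fin n → X, prodW μ A xs = 1 := by
  have h := prodW_mul_sum μ A n (fun _ => 1)
  simpa [condPMF_sum μ A hA] using h

lemma condPMF_ind (μ : X → ℝ) (A U : Finset X) (g : X → X) :
    ∑ x, condPMF μ A x * (if g x ∈ U then (1:ℝ) else 0) =
      cPw μ (univ.filter fun x => g x ∈ U) A := by
  unfold condPMF cPw Pw
  rw [Finset.sum_div]
  simp only [mul_ite, mul_one, mul_zero]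
  rw [← Finset.sum_filter]
  simp only [ite_div, zero_div]
  rw [Finset.sum_ite_mem]

lemma mgf_eq (μ : X → ℝ) (A U : Finset X) (hA : 0 < Pw μ A) (g : X → X) (n : ℕ) (s : ℝ) :
    ∑ xs : Fin n → X, prodW μ A xs *
      Real.exp (s * ∑ j, if g (xs j) ∈ U then (1:ℝ) else 0) =
    (1 + cPw μ (univ.filter fun x => g x ∈ U) A * (Real.exp s - 1)) ^ n := by
  rw [← condPMF_ind]
  have h := prodW_mul_sum μ A n (fun x => Real.exp (s * if g x ∈ U then (1:ℝ) else 0))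
  simp only [← Real.exp_sum, ← Finset.mul_sum] at h
  rw [h]
  congr 1
  rw [Finset.sum_mul]
  refine Eq.trans ?_ (congrArg₂ (· + ·) (condPMF_sum μ A hA) rfl)
  refine Eq.trans ?_ Finset.sum_add_distrib
  apply Finset.sum_congr rfl
  intro x _
  split_ifs
  · rw [mul_one]; ring
  · simp

lemma tail (μ : X → ℝ) (hμ : ∀ x, 0 ≤ μ x) (A U : Finset X) (hA : 0 < Pw μ A) (g : X → X)
    (n : ℕ) (hn : 0 < n) (s a b : ℝ)
    (hb : 1 + cPw μ (univ.filter fun x => g x ∈ U) A * (Real.exp s - 1) ≤ Real.exp b)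
    (h0 : 0 ≤ cPw μ (univ.filter fun x => g x ∈ U) A)
    (h1 : cPw μ (univ.filter fun x => g x ∈ U) A ≤ 1) :
    ∑ xs : Fin n → X, prodW μ A xs * (if s * a < s * empFreq U g xs then (1:ℝ) else 0) ≤
      Real.exp (n * (b - s * a)) := by
  have hn' : (0:ℝ) < n := by exact_mod_cast hn
  calc _ ≤ ∑ xs : Fin n → X, prodW μ A xs *
      (Real.exp (s * ∑ j, if g (xs j) ∈ U then (1:ℝ) else 0) * Real.exp (-(n * (s * a)))) := by
        apply Finset.sum_le_sum
        intro xs _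
        apply mul_le_mul_of_nonneg_left _ (prodW_nonneg μ hμ A hA xs)
        split_ifs with h
        · rw [← Real.exp_add]
          apply Real.one_le_exp
          have e : n * (s * empFreq U g xs) = s * ∑ j, if g (xs j) ∈ U then (1:ℝ) else 0 := by
            unfold empFreq
            field_simp
          rw [← e]
          nlinarith
        · positivity
    _ = (1 + cPw μ (univ.filter fun x => g x ∈ U) A * (Real.exp s - 1)) ^ n *
          Real.exp (-(n * (s * a))) := by
        rw [← mgf_eq μ A U hA, Finset.sum_mul]
        simp only [mul_assoc]
    _ ≤ Real.exp b ^ n * Real.exp (-(n * (s * a))) := by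
        gcongr
        nlinarith [Real.exp_pos s]
    _ = _ := by
        rw [← Real.exp_nat_mul, ← Real.exp_add]
        congr 1; ring

lemma cPw_nonneg (μ : X → ℝ) (hμ : ∀ x, 0 ≤ μ x) (A B : Finset X) (hB : 0 < Pw μ B) :
    0 ≤ cPw μ A B :=
  div_nonneg (Finset.sum_nonneg fun x _ => hμ x) hB.le

lemma cPw_le_one (μ : X → ℝ) (hμ : ∀ x, 0 ≤ μ x) (A B : Finset X) (hB : 0 < Pw μ B) :
    cPw μ A B ≤ 1 := by
  unfold cPw
  rw [div_le_one hB]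
  exact Finset.sum_le_sum_of_subset_of_nonneg Finset.inter_subset_right fun x _ _ => hμ x

lemma det_aux (p q ph qh t ε δ : ℝ) (hp0 : 0 ≤ p) (hp1 : p ≤ 1) (hq0 : 0 < q) (hq1 : q ≤ 1)
    (ht : 0 ≤ t) (hε : 0 ≤ ε) (hε1 : ε < 1) (hδ0 : 0 < δ) (hδ1 : δ ≤ 1) (h : t + 2 * ε ≤ δ * q)
    (h1 : ph ≤ p + t) (h2 : p - t ≤ ph) (h3 : qh ≤ (1 + ε) * q) (h4 : (1 - ε) * q ≤ qh) :
    |p / q - ph / qh| ≤ δ := by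
  have hqh : 0 < qh := lt_of_lt_of_le (mul_pos (by linarith) hq0) h4
  have hδq : δ * q ≤ 1 := by nlinarith
  have k1 : t + ε ≤ δ * qh := by nlinarith
  have k2 : p * ε ≤ ε := by nlinarith
  have k3 : q * (p * ε + t) ≤ q * (δ * qh) := mul_le_mul_of_nonneg_left (by linarith) hq0.le
  rw [div_sub_div _ _ hq0.ne' hqh.ne', abs_div, abs_of_pos (mul_pos hq0 hqh),
    div_le_iff₀ (mul_pos hq0 hqh), abs_le]
  have a1 : p * (qh - q) ≤ p * (ε * q) := mul_le_mul_of_nonneg_left (by linarith) hp0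
  have a2 : p * (-(ε * q)) ≤ p * (qh - q) := mul_le_mul_of_nonneg_left (by linarith) hp0
  have a3 : q * (p - ph) ≤ q * t := mul_le_mul_of_nonneg_left (by linarith) hq0.le
  have a4 : q * (-t) ≤ q * (p - ph) := mul_le_mul_of_nonneg_left (by linarith) hq0.le
  constructor <;> nlinarith

lemma samplePr_le (μ : X → ℝ) (hμ : ∀ x, 0 ≤ μ x) (A B : Finset X) (hA : 0 < Pw μ A)
    (hB : 0 < Pw μ B) (nA nB : ℕ) (E : (Fin nA → X) → (Fin nB → X) → Prop)
    (f : (Fin nA → X) → ℝ) (g : (Fin nB → X) → ℝ)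
    (h : ∀ xs zs, (if E xs zs then (1:ℝ) else 0) ≤ f xs + g zs) :
    samplePr μ A B nA nB E ≤ ∑ xs, prodW μ A xs * f xs + ∑ zs, prodW μ B zs * g zs := by
  unfold samplePr
  calc _ ≤ ∑ xs : Fin nA → X, ∑ zs : Fin nB → X,
        prodW μ A xs * prodW μ B zs * (f xs + g zs) := by
        apply Finset.sum_le_sum; intro xs _
        apply Finset.sum_le_sum; intro zs _
        apply mul_le_mul_of_nonneg_left (h xs zs)
        exact mul_nonneg (prodW_nonneg μ hμ A hA xs) (prodW_nonneg μ hμ B hB zs)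
    _ = (∑ xs : Fin nA → X, prodW μ A xs * f xs) * (∑ zs : Fin nB → X, prodW μ B zs) +
        (∑ xs : Fin nA → X, prodW μ A xs) * ∑ zs : Fin nB → X, prodW μ B zs * g zs := by
        rw [Finset.sum_mul_sum, Finset.sum_mul_sum, ← Finset.sum_add_distrib]
        apply Finset.sum_congr rfl; intro xs _
        rw [← Finset.sum_add_distrib]
        apply Finset.sum_congr rfl; intro zs _
        ring
    _ = _ := by rw [prodW_sum μ A hA, prodW_sum μ B hB, mul_one, one_mul]

set_option maxHeartbeats 1000000 in
/-- Corollary `cor:abs-concentration`: two-sided concentration of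
the empirical expansion ratio for a fixed set. -/
theorem fixed_set_two_sided_concentration
    (μ : X → ℝ) (A B U : Finset X) (n : X → X) (qbar δ : ℝ) (nA nB : ℕ)
    (hμ : ∀ x, 0 ≤ μ x) (hμ1 : ∑ x, μ x = 1)
    (hA : 0 < Pw μ A) (hB : 0 < Pw μ B)
    (hn : ∀ x ∈ A, n x ∈ B)
    (hqbar : 0 < qbar) (hq : qbar ≤ cPw μ U B)
    (hnA : 0 < nA) (hnB : 0 < nB)
    (hδ0 : 0 < δ) (hδ1 : δ ≤ 1) :
    samplePr μ A B nA nB (fun xs zs =>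
        |cPw μ (univ.filter fun x => n x ∈ U) A / cPw μ U B -
          empRatio U n xs zs| > δ) ≤
      4 * Real.exp (-(nA : ℝ) * δ ^ 2 *
        ((nB * qbar / nA) * qbar ^ 2 / (4 + Real.sqrt (nB * qbar / nA)) ^ 2)) := by
  have hq' : cPw μ (univ.filter fun x => id x ∈ U) B = cPw μ U B := by
    congr 1; ext x; simp
  have hp0 := cPw_nonneg μ hμ (univ.filter fun x => n x ∈ U) A hA
  have hp1 := cPw_le_one μ hμ (univ.filter fun x => n x ∈ U) A hA
  have hq0 : 0 < cPw μ U B := lt_of_lt_of_le hqbar hq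
  have hq1 := cPw_le_one μ hμ U B hB
  have TA := fun s a b hb => tail μ hμ A U hA n nA hnA s a b hb hp0 hp1
  have TB := tail μ hμ B U hB id nB hnB
  rw [hq'] at TB
  replace TB := fun s a b hb => TB s a b hb hq0.le hq1
  set p := cPw μ (univ.filter fun x => n x ∈ U) A with hpdef
  set q := cPw μ U B with hqdef
  have hnA' : (0:ℝ) < nA := by exact_mod_cast hnA
  have hnB' : (0:ℝ) < nB := by exact_mod_cast hnB
  have hγ : 0 < nB * qbar / nA := by positivity
  set r := Real.sqrt (nB * qbar / nA) with hr
  have hr0 : 0 < r := Real.sqrt_pos.2 hγ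
  have hr2 : r ^ 2 = nB * qbar / nA := Real.sq_sqrt hγ.le
  set w := Real.sqrt (qbar / q) with hw
  have hw0 : 0 ≤ w := Real.sqrt_nonneg _
  have hw1 : w ≤ 1 := Real.sqrt_le_one.2 ((div_le_one hq0).2 hq)
  have hw2 : w ^ 2 = qbar / q := Real.sq_sqrt (by positivity)
  obtain ⟨t, ht⟩ : ∃ t, t = δ * qbar * r / (4 + r) := ⟨_, rfl⟩
  obtain ⟨ε, hε⟩ : ∃ ε, ε = 2 * δ * qbar * w / (4 + r) := ⟨_, rfl⟩
  have ht0 : 0 ≤ t := by rw [ht]; positivity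
  have hε0 : 0 ≤ ε := by rw [hε]; positivity
  have hsum : t + 2 * ε ≤ δ * qbar := by
    have : t + 2 * ε = δ * qbar * ((r + 4 * w) / (4 + r)) := by rw [ht, hε]; ring
    rw [this]
    apply mul_le_of_le_one_right (by positivity)
    rw [div_le_one (by positivity)]; linarith
  have hsum' : t + 2 * ε ≤ δ * q := hsum.trans (mul_le_mul_of_nonneg_left hq hδ0.le)
  have hδq : δ * q ≤ 1 := by nlinarith
  have hε1 : ε < 1 := by linarith
  set Q := -(nA : ℝ) * δ ^ 2 * ((nB * qbar / nA) * qbar ^ 2 / (4 + r) ^ 2) with hQ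
  have eA : nA * (-t ^ 2) = Q := by
    rw [hQ, ht, ← hr2]; field_simp
  have eB : nB * (-(q * ε ^ 2 / 4)) = Q := by
    have : ε ^ 2 = 4 * δ ^ 2 * qbar ^ 2 * (qbar / q) / (4 + r) ^ 2 := by
      rw [hε, ← hw2, div_pow]; ring
    rw [hQ, this]; field_simp
  have A1 := TA (4 * t) (p + t) _ (hoeff_aux p (4 * t) hp0 hp1)
  have A2 := TA (-(4 * t)) (p - t) _ (hoeff_aux p (-(4 * t)) hp0 hp1)
  have B1 := TB (ε / 2) ((1 + ε) * q) _ (chern_aux q (ε / 2) hq0.le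
    (by rw [abs_le]; constructor <;> linarith))
  have B2 := TB (-(ε / 2)) ((1 - ε) * q) _ (chern_aux q (-(ε / 2)) hq0.le
    (by rw [abs_le]; constructor <;> linarith))
  have A1' : (nA:ℝ) * (p * (4 * t) + (4 * t) ^ 2 / 8 - 4 * t * (p + t)) ≤ Q := by
    rw [← eA]; apply mul_le_mul_of_nonneg_left _ hnA'.le; linarith only [sq_nonneg t]
  have A2' : (nA:ℝ) * (p * (-(4 * t)) + (-(4 * t)) ^ 2 / 8 - -(4 * t) * (p - t)) ≤ Q := by
    rw [← eA]; apply mul_le_mul_of_nonneg_left _ hnA'.le; linarith only [sq_nonneg t]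
  have B1' : (nB:ℝ) * (q * (ε / 2 + (ε / 2) ^ 2) - ε / 2 * ((1 + ε) * q)) ≤ Q := by
    rw [← eB]; apply le_of_eq; ring
  have B2' : (nB:ℝ) * (q * (-(ε / 2) + (-(ε / 2)) ^ 2) - -(ε / 2) * ((1 - ε) * q)) ≤ Q := by
    rw [← eB]; apply le_of_eq; ring
  replace A1 := A1.trans (Real.exp_le_exp.2 A1')
  replace A2 := A2.trans (Real.exp_le_exp.2 A2')
  replace B1 := B1.trans (Real.exp_le_exp.2 B1')
  replace B2 := B2.trans (Real.exp_le_exp.2 B2')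
  have htp : 0 < t := by rw [ht]; positivity
  have hεp : 0 < ε := by
    have : 0 < w := Real.sqrt_pos.2 (by positivity)
    rw [hε]; positivity
  refine (samplePr_le μ hμ A B hA hB nA nB _
    (fun xs => (if 4 * t * (p + t) < 4 * t * empFreq U n xs then (1:ℝ) else 0) +
      (if -(4 * t) * (p - t) < -(4 * t) * empFreq U n xs then (1:ℝ) else 0))
    (fun zs => (if ε / 2 * ((1 + ε) * q) < ε / 2 * empFreq U id zs then (1:ℝ) else 0) +
      (if -(ε / 2) * ((1 - ε) * q) < -(ε / 2) * empFreq U id zs then (1:ℝ) else 0)) ?_).trans ?_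
  · intro xs zs
    by_cases c1 : 4 * t * (p + t) < 4 * t * empFreq U n xs
    · rw [if_pos c1]; split_ifs <;> norm_num
    by_cases c2 : -(4 * t) * (p - t) < -(4 * t) * empFreq U n xs
    · rw [if_pos c2]; split_ifs <;> norm_num
    by_cases c3 : ε / 2 * ((1 + ε) * q) < ε / 2 * empFreq U id zs
    · rw [if_pos c3]; split_ifs <;> norm_num
    by_cases c4 : -(ε / 2) * ((1 - ε) * q) < -(ε / 2) * empFreq U id zs
    · rw [if_pos c4]; split_ifs <;> norm_num
    have d1 : empFreq U n xs ≤ p + t := le_of_mul_le_mul_left (not_lt.1 c1) (by positivity)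
    have d2 : p - t ≤ empFreq U n xs :=
      le_of_mul_le_mul_left (a := 4 * t) (by linarith [not_lt.1 c2]) (by positivity)
    have d3 : empFreq U id zs ≤ (1 + ε) * q := le_of_mul_le_mul_left (not_lt.1 c3) (by positivity)
    have d4 : (1 - ε) * q ≤ empFreq U id zs :=
      le_of_mul_le_mul_left (a := ε / 2) (by linarith [not_lt.1 c4]) (by positivity)
    have d := det_aux p q _ _ t ε δ hp0 hp1 hq0 hq1 ht0 hε0 hε1 hδ0 hδ1 hsum' d1 d2 d3 d4
    rw [if_neg (by unfold empRatio; exact not_lt.2 d)]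
    rw [if_neg c1, if_neg c2, if_neg c3, if_neg c4]; norm_num
  · have e4 : 4 * Real.exp Q = (Real.exp Q + Real.exp Q) + (Real.exp Q + Real.exp Q) := by ring
    rw [e4]
    refine add_le_add (le_trans (le_of_eq ?_) (add_le_add A1 A2))
      (le_trans (le_of_eq ?_) (add_le_add B1 B2))
    · rw [← Finset.sum_add_distrib]
      exact Finset.sum_congr rfl fun _ _ => mul_add _ _ _
    · rw [← Finset.sum_add_distrib]
      exact Finset.sum_congr rfl fun _ _ => mul_add _ _ _
end
end
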